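/- arXiv:1807.07829 — 3 statements merged into one kernel-verified Lean document; each statement's English description precedes it below -/
import Mathlib

section
/- Every local-hidden-state model for steering from Alice to Bob with N measurement settings and d outcomes satisfies S_E := Σ_{x=1}^N Σ_{a=1}^d Σ_{λ∈Λ} p(λ) p_λ(a|x) ⟨φ_x^a, σ_λ φ_x^a⟩ ≤ s_N^B, where {φ_x^a} are Bob's orthonormal measurement bases and s_N^B is the maximal operator norm of a sum of N distinct projectors |φ_{x_i}^{a_i}⟩⟨φ_{x_i}^{a_i}|. -/
/-! The functional is affine in the distribution of the hidden variable and in each of Alice's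
response distributions, so it is at most its value at some fixed hidden variable with
deterministic responses `x ↦ f x`. That value is `tr(M σ)`, where `M = ∑ x, |φ_x^{f x}⟩⟨φ_x^{f x}|`
is a sum of `N` distinct projectors. Decomposing the state `σ` into rank-one terms and applying
Cauchy–Schwarz to each of them gives `|tr(M σ)| ≤ ‖M‖ ≤ s_N^B`. -/

open scoped ComplexOrder

noncomputable section

/-- `|v⟩⟨v|`, the rank-one projection matrix associated with the vector `v`. -/
def rankOneProj {n : Type*} [Fintype n] (v : n → ℂ) : Matrix n n ℂ :=
  Matrix.vecMulVec v (star v)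

/-- The operator (spectral) norm of a complex matrix. -/
def opNorm {n : Type*} [Fintype n] [DecidableEq n] (M : Matrix n n ℂ) : ℝ :=
  ‖Matrix.toEuclideanCLM (𝕜 := ℂ) (n := n) M‖

/-- A density matrix: positive semidefinite with unit trace. -/
def IsDensityMatrix {n : Type*} [Fintype n] [DecidableEq n] (ρ : Matrix n n ℂ) : Prop :=
  ρ.PosSemidef ∧ ρ.trace = 1

/-- `s_k^B` : the maximal operator norm of a sum of `k` distinct projectors
`|φ_x^a⟩⟨φ_x^a|` drawn from Bob's measurement eigenvectors. -/
def sMax {N d : ℕ} (φ : Fin N → Fin d → (Fin d → ℂ)) (k : ℕ) : ℝ :=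
  sSup { r : ℝ | ∃ T : Finset (Fin N × Fin d), T.card = k ∧
    r = opNorm (∑ q ∈ T, rankOneProj (φ q.1 q.2)) }

section TraceBound

variable {n : Type*} [Fintype n]

lemma trace_rankOneProj (v : n → ℂ) :
    (rankOneProj v).trace = (‖WithLp.toLp 2 v‖ ^ 2 : ℝ) := by
  rw [rankOneProj, Matrix.trace_vecMulVec, ← EuclideanSpace.inner_toLp_toLp,
    inner_self_eq_norm_sq_to_K, Complex.ofReal_pow]
  rfl

variable [DecidableEq n]

lemma trace_mul_rankOneProj (M : Matrix n n ℂ) (v : n → ℂ) :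
    (M * rankOneProj v).trace =
      inner ℂ (WithLp.toLp 2 v) (Matrix.toEuclideanCLM (𝕜 := ℂ) M (WithLp.toLp 2 v)) := by
  rw [rankOneProj, Matrix.mul_vecMulVec, Matrix.trace_vecMulVec, Matrix.toEuclideanCLM_toLp,
    EuclideanSpace.inner_toLp_toLp]

lemma norm_trace_mul_rankOneProj_le (M : Matrix n n ℂ) (v : n → ℂ) :
    ‖(M * rankOneProj v).trace‖ ≤ opNorm M * (rankOneProj v).trace.re := by
  rw [trace_mul_rankOneProj, trace_rankOneProj, Complex.ofReal_re]
  set u : EuclideanSpace ℂ n := WithLp.toLp 2 v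
  calc ‖inner ℂ u (Matrix.toEuclideanCLM (𝕜 := ℂ) M u)‖
      ≤ ‖u‖ * ‖Matrix.toEuclideanCLM (𝕜 := ℂ) M u‖ := norm_inner_le_norm _ _
    _ ≤ ‖u‖ * (opNorm M * ‖u‖) := by gcongr; exact ContinuousLinearMap.le_opNorm _ _
    _ = opNorm M * ‖u‖ ^ 2 := by ring

lemma norm_trace_mul_le_of_posSemidef (M : Matrix n n ℂ) {ρ : Matrix n n ℂ}
    (hρ : ρ.PosSemidef) : ‖(M * ρ).trace‖ ≤ opNorm M * ρ.trace.re := by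
  obtain ⟨m, v, hv⟩ := Matrix.posSemidef_iff_eq_sum_vecMulVec.mp hρ
  replace hv : ρ = ∑ i, rankOneProj (v i) := hv
  rw [hv, Finset.mul_sum, Matrix.trace_sum, Matrix.trace_sum, Complex.re_sum, Finset.mul_sum]
  exact norm_sum_le_of_le _ fun i _ => norm_trace_mul_rankOneProj_le M (v i)

lemma IsDensityMatrix.re_trace_mul_le_opNorm {ρ : Matrix n n ℂ} (hρ : IsDensityMatrix ρ)
    (M : Matrix n n ℂ) : (M * ρ).trace.re ≤ opNorm M :=
  calc (M * ρ).trace.re ≤ ‖(M * ρ).trace‖ := Complex.re_le_norm _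
    _ ≤ opNorm M * ρ.trace.re := norm_trace_mul_le_of_posSemidef M hρ.1
    _ = opNorm M := by rw [hρ.2, Complex.one_re, mul_one]

end TraceBound

section Averages

variable {𝕜 : Type*} [Semiring 𝕜] [LinearOrder 𝕜] [IsStrictOrderedRing 𝕜]

lemma exists_sum_mul_le_of_mem_stdSimplex {ι : Type*} [Fintype ι] {w : ι → 𝕜}
    (hw : w ∈ stdSimplex 𝕜 ι) (v : ι → 𝕜) : ∃ i, ∑ j, w j * v j ≤ v i := by
  have : Nonempty ι := by
    by_contra hι
    simpa [not_nonempty_iff.mp hι] using hw.2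
  obtain ⟨i, hi⟩ := Finite.exists_max v
  refine ⟨i, ?_⟩
  calc ∑ j, w j * v j ≤ ∑ j, w j * v i :=
        Finset.sum_le_sum fun j _ => mul_le_mul_of_nonneg_left (hi j) (hw.1 j)
    _ = v i := by rw [← Finset.sum_mul, hw.2, one_mul]

lemma exists_sum_sum_mul_le_of_mem_stdSimplex {X : Type*} [Fintype X] {A : X → Type*}
    [∀ x, Fintype (A x)] {w : ∀ x, A x → 𝕜} (hw : ∀ x, w x ∈ stdSimplex 𝕜 (A x))
    (v : ∀ x, A x → 𝕜) : ∃ f : ∀ x, A x, ∑ x, ∑ a, w x a * v x a ≤ ∑ x, v x (f x) := by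
  choose f hf using fun x => exists_sum_mul_le_of_mem_stdSimplex (hw x) (v x)
  exact ⟨f, Finset.sum_le_sum fun x _ => hf x⟩

end Averages

section SMax

variable {N d : ℕ} (φ : Fin N → Fin d → (Fin d → ℂ))

lemma opNorm_sum_rankOneProj_le_sMax (T : Finset (Fin N × Fin d)) :
    opNorm (∑ q ∈ T, rankOneProj (φ q.1 q.2)) ≤ sMax φ T.card := by
  refine le_csSup (Set.Finite.bddAbove ?_) ⟨T, rfl, rfl⟩
  refine (Set.finite_range fun S : Finset (Fin N × Fin d) =>
    opNorm (∑ q ∈ S, rankOneProj (φ q.1 q.2))).subset ?_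
  rintro _ ⟨S, -, rfl⟩
  exact ⟨S, rfl⟩

lemma opNorm_sum_rankOneProj_apply_le_sMax (f : Fin N → Fin d) :
    opNorm (∑ x, rankOneProj (φ x (f x))) ≤ sMax φ N := by
  let graph : Fin N ↪ Fin N × Fin d := ⟨fun x => (x, f x), fun _ _ h => congrArg Prod.fst h⟩
  have h := opNorm_sum_rankOneProj_le_sMax φ (Finset.univ.map graph)
  rwa [Finset.card_map, Finset.card_univ, Fintype.card_fin, Finset.sum_map] at h

end SMax

theorem steering_functional_le_general {X Λ n : Type*} [Fintype X] [Fintype Λ] [Fintype n]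
    [DecidableEq n] {A : X → Type*} [∀ x, Fintype (A x)] (E : ∀ x, A x → Matrix n n ℂ)
    {p : Λ → ℝ} (hp : p ∈ stdSimplex ℝ Λ)
    {resp : Λ → ∀ x, A x → ℝ} (hresp : ∀ l x, resp l x ∈ stdSimplex ℝ (A x))
    {σ : Λ → Matrix n n ℂ} (hσ : ∀ l, IsDensityMatrix (σ l))
    {C : ℝ} (hC : ∀ f : ∀ x, A x, opNorm (∑ x, E x (f x)) ≤ C) :
    ∑ x, ∑ a, ∑ l, p l * resp l x a * (E x a * σ l).trace.re ≤ C := by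
  obtain ⟨l, hl⟩ := exists_sum_mul_le_of_mem_stdSimplex hp
    fun l => ∑ x, ∑ a, resp l x a * (E x a * σ l).trace.re
  obtain ⟨f, hf⟩ := exists_sum_sum_mul_le_of_mem_stdSimplex (hresp l)
    fun x a => (E x a * σ l).trace.re
  calc ∑ x, ∑ a, ∑ l, p l * resp l x a * (E x a * σ l).trace.re
      = ∑ l, p l * ∑ x, ∑ a, resp l x a * (E x a * σ l).trace.re := by
        simp_rw [Finset.mul_sum, ← mul_assoc]
        rw [Finset.sum_comm (s := (Finset.univ : Finset Λ))]
        exact Finset.sum_congr rfl fun x _ => Finset.sum_comm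
    _ ≤ ∑ x, ∑ a, resp l x a * (E x a * σ l).trace.re := hl
    _ ≤ ∑ x, (E x (f x) * σ l).trace.re := hf
    _ = ((∑ x, E x (f x)) * σ l).trace.re := by
        rw [Finset.sum_mul, Matrix.trace_sum, Complex.re_sum]
    _ ≤ opNorm (∑ x, E x (f x)) := (hσ l).re_trace_mul_le_opNorm _
    _ ≤ C := hC f

/-- **Theorem 1 (steering inequality).**  Every local-hidden-state model for steering from
Alice to Bob satisfies `S_E ≤ s_N^B`. -/
theorem steering_functional_le
    (N d : ℕ) (hN : 1 ≤ N) (hd : 1 ≤ d)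
    (φ : Fin N → Fin d → (Fin d → ℂ))
    (hφ : ∀ x a b, (∑ i, (starRingEnd ℂ) (φ x a i) * φ x b i) =
      if a = b then 1 else 0)
    (Λ : Type) [Fintype Λ]
    (p : Λ → ℝ) (hp : ∀ l, 0 ≤ p l) (hpsum : ∑ l, p l = 1)
    (resp : Λ → Fin N → Fin d → ℝ)
    (hresp : ∀ l x a, 0 ≤ resp l x a ∧ resp l x a ≤ 1)
    (hrespsum : ∀ l x, ∑ a, resp l x a = 1)
    (σ : Λ → Matrix (Fin d) (Fin d) ℂ) (hσ : ∀ l, IsDensityMatrix (σ l)) :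
    (∑ x, ∑ a, ∑ l, p l * resp l x a *
        (Matrix.trace (rankOneProj (φ x a) * σ l)).re) ≤ sMax φ N :=
  steering_functional_le_general (fun x a => rankOneProj (φ x a)) ⟨hp, hpsum⟩
    (fun l x => ⟨fun a => (hresp l x a).1, hrespsum l x⟩) hσ
    (opNorm_sum_rankOneProj_apply_le_sMax φ)
end
end

section
/- Let p, q, w ∈ ℝ^n have all entries nonnegative, and suppose p is weakly submajorized by w, i.e., for every k = 1,…,n the sum of the k largest entries of p is at most the sum of the k largest entries of w. Then Σ_{i=1}^n p_i q_i ≤ Σ_{i=1}^n w↓_i q↓_i, where v↓ denotes the decreasing rearrangement of v. -/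
/-!
The rearrangement inequality gives `∑ pᵢ qᵢ ≤ ∑ p↓ᵢ q↓ᵢ`. Submajorization compares the partial sums
of `p↓` and `w↓`, and by summation by parts, pairing with the nonnegative nonincreasing weights
`q↓` turns a comparison of partial sums into a comparison of weighted sums.
-/

noncomputable section

/-- The decreasing rearrangement of a real vector. -/
def dSort {n : ℕ} (v : Fin n → ℝ) : Fin n → ℝ := fun i => v (Tuple.sort v i.rev)

/-- The sum of the `k` largest entries of a real vector. -/
def topSum {n : ℕ} (v : Fin n → ℝ) (k : ℕ) : ℝ :=
  ∑ i ∈ Finset.univ.filter (fun i : Fin n => (i : ℕ) < k), dSort v i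

section SummationByParts

variable {ι R M : Type*} [Ring R] [AddCommGroup M] [Module R M]

theorem sum_insert_smul_eq_sum_sub_smul_add [DecidableEq ι] {s : Finset ι} {a : ι}
    (ha : a ∉ s) (c : ι → R) (x : ι → M) :
    ∑ i ∈ insert a s, c i • x i =
      ∑ i ∈ s, (c i - c a) • x i + c a • ∑ i ∈ insert a s, x i := by
  simp only [Finset.sum_insert ha, sub_smul, Finset.sum_sub_distrib, smul_add, Finset.smul_sum]
  abel

variable [LinearOrder ι] [PartialOrder R] [IsOrderedAddMonoid R]
  [PartialOrder M] [IsOrderedAddMonoid M] [PosSMulMono R M]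

theorem sum_smul_le_sum_smul_of_antitoneOn {s : Finset ι} {c : ι → R} {x y : ι → M}
    (hc : AntitoneOn c s) (hc₀ : ∀ i ∈ s, 0 ≤ c i)
    (hxy : ∀ k ∈ s, ∑ i ∈ s with i ≤ k, x i ≤ ∑ i ∈ s with i ≤ k, y i) :
    ∑ i ∈ s, c i • x i ≤ ∑ i ∈ s, c i • y i := by
  induction s using Finset.induction_on_max generalizing c with
  | empty => simp
  | insert a s hlt ih =>
    have ha : a ∉ s := fun h => (hlt a h).false
    have has : a ∈ insert a s := Finset.mem_insert_self a s
    have hle : ∀ i ∈ insert a s, i ≤ a := by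
      simpa using fun i hi => (hlt i hi).le
    have htotal : ∑ i ∈ insert a s, x i ≤ ∑ i ∈ insert a s, y i := by
      simpa only [Finset.filter_true_of_mem hle] using hxy a has
    have hinit : ∑ i ∈ s, (c i - c a) • x i ≤ ∑ i ∈ s, (c i - c a) • y i := by
      refine ih (fun i hi j hj hij => ?_) (fun i hi => ?_) fun k hk => ?_
      · exact sub_le_sub_right
          (hc (Finset.mem_insert_of_mem hi) (Finset.mem_insert_of_mem hj) hij) _
      · exact sub_nonneg.2 (hc (Finset.mem_insert_of_mem hi) has (hlt i hi).le)
      · simpa only [Finset.filter_insert, if_neg (hlt k hk).not_ge]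
          using hxy k (Finset.mem_insert_of_mem hk)
    rw [sum_insert_smul_eq_sum_sub_smul_add ha, sum_insert_smul_eq_sum_sub_smul_add ha]
    exact add_le_add hinit (smul_le_smul_of_nonneg_left htotal (hc₀ a has))

end SummationByParts

section DSort

variable {n : ℕ}

theorem antitone_dSort (v : Fin n → ℝ) : Antitone (dSort v) := fun _ _ hij =>
  Tuple.monotone_sort v (Fin.rev_le_rev.2 hij)

theorem exists_perm_dSort_eq_comp (v : Fin n → ℝ) :
    ∃ σ : Equiv.Perm (Fin n), dSort v = v ∘ σ :=
  ⟨Fin.revPerm.trans (Tuple.sort v), rfl⟩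

theorem topSum_succ (v : Fin n → ℝ) (k : Fin n) :
    topSum v (k + 1) = ∑ i with i ≤ k, dSort v i := by
  simp only [topSum, Nat.lt_succ_iff, Fin.le_def]

theorem sum_mul_le_sum_dSort_mul_dSort (p q : Fin n → ℝ) :
    ∑ i, p i * q i ≤ ∑ i, dSort p i * dSort q i := by
  obtain ⟨σ, hσ⟩ := exists_perm_dSort_eq_comp p
  obtain ⟨τ, hτ⟩ := exists_perm_dSort_eq_comp q
  have hpq : Monovary (dSort p) (dSort q) := (antitone_dSort p).monovary (antitone_dSort q)
  calc ∑ i, p i * q i = ∑ i, p (τ i) * q (τ i) := (Equiv.sum_comp τ fun i => p i * q i).symm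
    _ = ∑ i, dSort p (σ.symm (τ i)) * dSort q i := by simp [hσ, hτ]
    _ ≤ ∑ i, dSort p i * dSort q i :=
      hpq.sum_comp_perm_mul_le_sum_mul (σ := τ.trans σ.symm)

end DSort

theorem inner_le_of_weakSubmajorize_general {n : ℕ} {p q w : Fin n → ℝ} (hq : ∀ i, 0 ≤ q i)
    (hmaj : ∀ k, 1 ≤ k → k ≤ n → topSum p k ≤ topSum w k) :
    ∑ i, p i * q i ≤ ∑ i, dSort w i * dSort q i := by
  have hpartial (k : Fin n) : ∑ i with i ≤ k, dSort p i ≤ ∑ i with i ≤ k, dSort w i := by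
    simpa only [topSum_succ] using hmaj (k + 1) (Nat.le_add_left 1 k) k.isLt
  calc ∑ i, p i * q i ≤ ∑ i, dSort p i * dSort q i := sum_mul_le_sum_dSort_mul_dSort p q
    _ ≤ ∑ i, dSort w i * dSort q i := by
      simpa only [smul_eq_mul, mul_comm] using
        sum_smul_le_sum_smul_of_antitoneOn (s := .univ) ((antitone_dSort q).antitoneOn _)
          (fun i _ => hq _) fun k _ => hpartial k

/-- **Majorization inequality.** If `p` is weakly submajorized by `w`, then
`Σ pᵢ qᵢ ≤ Σ w↓ᵢ q↓ᵢ` for nonnegative vectors. -/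
theorem inner_le_of_weakSubmajorize
    (n : ℕ) (p q w : Fin n → ℝ)
    (hp : ∀ i, 0 ≤ p i) (hq : ∀ i, 0 ≤ q i) (hw : ∀ i, 0 ≤ w i)
    (hmaj : ∀ k, 1 ≤ k → k ≤ n → topSum p k ≤ topSum w k) :
    ∑ i, p i * q i ≤ ∑ i, dSort w i * dSort q i :=
  inner_le_of_weakSubmajorize_general hq hmaj
end
end

section
/- Let p ∈ ℝ with 1/√2 < p ≤ 1. Define the 2×2 matrices σ_1^+ := (p/2)|e_1⟩⟨e_1| + ((1−p)/4)·I, σ_1^− := (p/2)|e_0⟩⟨e_0| + ((1−p)/4)·I, σ_2^+ := (p/2)|x_−⟩⟨x_−| + ((1−p)/4)·I, σ_2^− := (p/2)|x_+⟩⟨x_+| + ((1−p)/4)·I, where e_0 = (1,0), e_1 = (0,1) and x_± = (e_0 ± e_1)/√2 (this is the conditional-state assemblage obtained from measuring σ_z and σ_x on Alice's side of the two-qubit Werner state ρ_w = p|φ^−⟩⟨φ^−| + (1−p)·I/4). Then there exist no finite set Λ, weights p(λ) ≥ 0 with Σ_λ p(λ) = 1, numbers p_λ(a|x) ∈ [0,1]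 with Σ_{a∈{+,−}} p_λ(a|x) = 1 for x ∈ {1,2}, and 2×2 density matrices σ_λ such that Σ_λ p(λ) p_λ(a|x) σ_λ = σ_x^a for all x ∈ {1,2} and a ∈ {+,−}; i.e., the Werner state is steerable from Alice to Bob for p > 1/√2. -/
/-!
For a density matrix `ρ` and a Hermitian `M`, positivity of the variance gives
`(tr Mρ)² ≤ tr M²ρ`. If the observables `M x` are Hermitian, square to `1` and anticommute, then
`(∑ x, c x • M x)² = (∑ x, (c x)²) • 1`, so `|∑ x, c x * tr (M x ρ)| ≤ √(∑ x, (c x)²)`. In a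
local-hidden-state model the difference of the two outcomes of setting `x` is an average of hidden
states with coefficients `c x ∈ [-1, 1]`; averaging the bound over the hidden variable gives a
linear steering inequality with bound `√(number of settings)`. For the Werner assemblage the
difference of outcomes of setting `x` is `-(p / 2)` times a Pauli matrix, and testing with `σ_z`
and `σ_x` gives `2 |p| ≤ √2`.
-/

open scoped ComplexOrder

noncomputable section

def e0 : Fin 2 → ℂ := ![1, 0]
def e1 : Fin 2 → ℂ := ![0, 1]
def xPlus : Fin 2 → ℂ := fun i => (e0 i + e1 i) / (Real.sqrt 2 : ℂ)
def xMinus : Fin 2 → ℂ := fun i => (e0 i - e1 i) / (Real.sqrt 2 : ℂ)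

/-- The conditional-state assemblage obtained from measuring `σ_z` (setting `0`) and `σ_x`
(setting `1`) on Alice's side of the two-qubit Werner state; `true` is outcome `+`,
`false` is outcome `−`. -/
def wernerAssemblage (p : ℝ) : Fin 2 → Bool → Matrix (Fin 2) (Fin 2) ℂ
  | 0, true  => ((p / 2 : ℝ) : ℂ) • rankOneProj e1 + (((1 - p) / 4 : ℝ) : ℂ) • 1
  | 0, false => ((p / 2 : ℝ) : ℂ) • rankOneProj e0 + (((1 - p) / 4 : ℝ) : ℂ) • 1
  | 1, true  => ((p / 2 : ℝ) : ℂ) • rankOneProj xMinus + (((1 - p) / 4 : ℝ) : ℂ) • 1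
  | 1, false => ((p / 2 : ℝ) : ℂ) • rankOneProj xPlus + (((1 - p) / 4 : ℝ) : ℂ) • 1

lemma sum_smul_mul_self_of_anticommute {ι R A : Type*} [CommRing R] [Ring A] [Algebra R A]
    {a : ι → A} (hsq : ∀ i, a i * a i = 1) (hanti : Pairwise fun i j => a i * a j = -(a j * a i))
    (s : Finset ι) (c : ι → R) :
    (∑ i ∈ s, c i • a i) * ∑ i ∈ s, c i • a i = (∑ i ∈ s, c i ^ 2) • 1 := by
  classical
  induction s using Finset.induction_on with
  | empty => simp
  | insert i s hi ih =>
    have hcross : a i * ∑ j ∈ s, c j • a j = -((∑ j ∈ s, c j • a j) * a i) := by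
      rw [Finset.mul_sum, Finset.sum_mul, ← Finset.sum_neg_distrib]
      refine Finset.sum_congr rfl fun j hj => ?_
      have hij : i ≠ j := fun h => hi (h ▸ hj)
      rw [mul_smul_comm, smul_mul_assoc, hanti hij, smul_neg]
    simp only [Finset.sum_insert hi, add_mul, mul_add, smul_mul_assoc, mul_smul_comm, hcross, ih,
      hsq]
    module

variable {n ι : Type*} [Fintype n]

/-- The expectation value `Re tr (M ρ)` of the observable `M` in the state `ρ`, as a real bilinear
form. It is defined for all matrices; the real part loses nothing when `M` and `ρ` are
Hermitian. -/
def expectation : Matrix n n ℂ →ₗ[ℝ] Matrix n n ℂ →ₗ[ℝ] ℝ :=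
  (LinearMap.mul ℝ (Matrix n n ℂ)).compr₂ (Complex.reLm ∘ₗ Matrix.traceLinearMap n ℝ ℂ)

lemma expectation_apply (M ρ : Matrix n n ℂ) : expectation M ρ = (M * ρ).trace.re := rfl

lemma expectation_mul_self_nonneg {M ρ : Matrix n n ℂ} (hM : M.IsHermitian)
    (hρ : ρ.PosSemidef) : 0 ≤ expectation (M * M) ρ := by
  have hpos : 0 ≤ (M * ρ * M.conjTranspose).trace := (hρ.mul_mul_conjTranspose_same M).trace_nonneg
  rw [hM.eq, Matrix.trace_mul_comm, ← mul_assoc] at hpos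
  exact (Complex.le_def.mp hpos).1

variable [DecidableEq n]

lemma IsDensityMatrix.expectation_one {ρ : Matrix n n ℂ} (hρ : IsDensityMatrix ρ) :
    expectation 1 ρ = 1 := by
  rw [expectation_apply, one_mul, hρ.2, Complex.one_re]

lemma IsDensityMatrix.sq_expectation_le {M ρ : Matrix n n ℂ} (hρ : IsDensityMatrix ρ)
    (hM : M.IsHermitian) : expectation M ρ ^ 2 ≤ expectation (M * M) ρ := by
  set m := expectation M ρ with hm
  have hcentered : (M - m • (1 : Matrix n n ℂ)).IsHermitian :=
    hM.sub (Matrix.isHermitian_one.smul (IsSelfAdjoint.all m))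
  have hexpand : (M - m • (1 : Matrix n n ℂ)) * (M - m • 1) =
      M * M - (2 * m) • M + m ^ 2 • 1 := by
    simp only [sub_mul, mul_sub, smul_mul_assoc, mul_smul_comm, one_mul, mul_one]
    module
  have hvariance := expectation_mul_self_nonneg hcentered hρ.1
  simp only [hexpand, map_add, map_sub, map_smul, LinearMap.add_apply, LinearMap.sub_apply,
    LinearMap.smul_apply, hρ.expectation_one, ← hm, smul_eq_mul] at hvariance
  linarith

/-- A family of sharp two-valued observables that anticommute pairwise, i.e. a Hermitian
representation of the generators of a Clifford algebra. -/
structure IsCliffordFamily (M : ι → Matrix n n ℂ) : Prop where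
  isHermitian : ∀ i, (M i).IsHermitian
  mul_self : ∀ i, M i * M i = 1
  anticommute : Pairwise fun i j => M i * M j = -(M j * M i)

lemma IsCliffordFamily.abs_sum_mul_expectation_le [Fintype ι] {M : ι → Matrix n n ℂ}
    (hM : IsCliffordFamily M) {ρ : Matrix n n ℂ} (hρ : IsDensityMatrix ρ) (c : ι → ℝ) :
    |∑ i, c i * expectation (M i) ρ| ≤ √(∑ i, c i ^ 2) := by
  apply Real.abs_le_sqrt
  have hherm : (∑ i, c i • M i).IsHermitian :=
    isSelfAdjoint_sum _ fun i _ => (hM.isHermitian i).smul (IsSelfAdjoint.all (c i))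
  calc (∑ i, c i * expectation (M i) ρ) ^ 2
      = expectation (∑ i, c i • M i) ρ ^ 2 := by
        simp only [map_sum, map_smul, LinearMap.sum_apply, LinearMap.smul_apply, smul_eq_mul]
    _ ≤ expectation ((∑ i, c i • M i) * ∑ i, c i • M i) ρ := hρ.sq_expectation_le hherm
    _ = ∑ i, c i ^ 2 := by
        rw [sum_smul_mul_self_of_anticommute hM.mul_self hM.anticommute, map_smul,
          LinearMap.smul_apply, hρ.expectation_one, smul_eq_mul, mul_one]

/-- A local-hidden-state model of the assemblage `A`, where `A x a` is the unnormalised state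
conditioned on outcome `a` of setting `x`: the hidden variable `l` has probability `w l`, prepares
the state `σ l`, and produces outcome `a` of setting `x` with probability `resp l x a`. -/
structure IsLocalHiddenStateModel {Λ O : Type*} [Fintype Λ] [Fintype O] (w : Λ → ℝ)
    (resp : Λ → ι → O → ℝ) (σ : Λ → Matrix n n ℂ) (A : ι → O → Matrix n n ℂ) : Prop where
  weight_nonneg : ∀ l, 0 ≤ w l
  weight_sum : ∑ l, w l = 1
  resp_nonneg : ∀ l x a, 0 ≤ resp l x a
  resp_sum : ∀ l x, ∑ a, resp l x a = 1
  isDensityMatrix : ∀ l, IsDensityMatrix (σ l)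
  sum_smul : ∀ x a, ∑ l, (w l * resp l x a) • σ l = A x a

namespace IsLocalHiddenStateModel

variable {Λ : Type*} [Fintype Λ] {w : Λ → ℝ} {resp : Λ → ι → Bool → ℝ} {σ : Λ → Matrix n n ℂ}
  {A : ι → Bool → Matrix n n ℂ}

lemma sq_resp_sub_le_one (h : IsLocalHiddenStateModel w resp σ A) (l : Λ) (x : ι) :
    (resp l x true - resp l x false) ^ 2 ≤ 1 := by
  have hsum := h.resp_sum l x
  rw [Fintype.sum_bool] at hsum
  rw [sq_le_one_iff_abs_le_one, abs_le]
  constructor <;> linarith [h.resp_nonneg l x true, h.resp_nonneg l x false]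

lemma expectation_sub (h : IsLocalHiddenStateModel w resp σ A) (M : Matrix n n ℂ) (x : ι) :
    expectation M (A x true - A x false) =
      ∑ l, w l * ((resp l x true - resp l x false) * expectation M (σ l)) := by
  simp only [← h.sum_smul, ← Finset.sum_sub_distrib, ← sub_smul, map_sum, map_smul, smul_eq_mul,
    ← mul_sub, mul_assoc]

theorem abs_sum_expectation_sub_le [Fintype ι] (h : IsLocalHiddenStateModel w resp σ A)
    {M : ι → Matrix n n ℂ} (hM : IsCliffordFamily M) :
    |∑ x, expectation (M x) (A x true - A x false)| ≤ √(Fintype.card ι) := by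
  set c := fun l x => resp l x true - resp l x false with hc
  have hbound (l : Λ) : |∑ x, c l x * expectation (M x) (σ l)| ≤ √(Fintype.card ι) := by
    refine (hM.abs_sum_mul_expectation_le (h.isDensityMatrix l) (c l)).trans (Real.sqrt_le_sqrt ?_)
    simpa using Finset.sum_le_card_nsmul Finset.univ _ 1 fun x _ => h.sq_resp_sub_le_one l x
  calc |∑ x, expectation (M x) (A x true - A x false)|
      = |∑ l, w l * ∑ x, c l x * expectation (M x) (σ l)| := by
        simp only [h.expectation_sub, Finset.mul_sum, hc]
        rw [Finset.sum_comm]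
    _ ≤ ∑ l, w l * |∑ x, c l x * expectation (M x) (σ l)| := by
        refine (Finset.abs_sum_le_sum_abs _ _).trans_eq (Finset.sum_congr rfl fun l _ => ?_)
        rw [abs_mul, abs_of_nonneg (h.weight_nonneg l)]
    _ ≤ ∑ l, w l * √(Fintype.card ι) :=
        Finset.sum_le_sum fun l _ => mul_le_mul_of_nonneg_left (hbound l) (h.weight_nonneg l)
    _ = √(Fintype.card ι) := by rw [← Finset.sum_mul, h.weight_sum, one_mul]

end IsLocalHiddenStateModel

/-- The Pauli matrices `σ_z` and `σ_x`, indexed by the settings of `wernerAssemblage`. -/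
def pauliZX : Fin 2 → Matrix (Fin 2) (Fin 2) ℂ :=
  ![!![1, 0; 0, -1], !![0, 1; 1, 0]]

lemma isCliffordFamily_pauliZX : IsCliffordFamily pauliZX where
  isHermitian x := by
    ext i j
    fin_cases x <;> fin_cases i <;> fin_cases j <;> simp [pauliZX]
  mul_self x := by
    fin_cases x <;> simp [pauliZX, Matrix.one_fin_two]
  anticommute x y hxy := by
    fin_cases x <;> fin_cases y <;> simp [pauliZX] at hxy ⊢

lemma rankOneProj_apply {m : Type*} [Fintype m] (v : m → ℂ) (i j : m) :
    rankOneProj v i j = v i * star (v j) := rfl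

lemma rankOneProj_e1_sub_rankOneProj_e0 :
    rankOneProj e1 - rankOneProj e0 = -pauliZX 0 := by
  ext i j
  fin_cases i <;> fin_cases j <;> simp [rankOneProj_apply, pauliZX, e0, e1]

lemma rankOneProj_xMinus_sub_rankOneProj_xPlus :
    rankOneProj xMinus - rankOneProj xPlus = -pauliZX 1 := by
  have hhalf : ((√2 : ℝ) : ℂ)⁻¹ * ((√2 : ℝ) : ℂ)⁻¹ = 1 / 2 := by
    rw [← mul_inv, ← Complex.ofReal_mul, Real.mul_self_sqrt zero_le_two]
    norm_num
  ext i j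
  fin_cases i <;> fin_cases j <;>
    norm_num [rankOneProj_apply, pauliZX, xMinus, xPlus, e0, e1, neg_div, hhalf]

lemma wernerAssemblage_sub (p : ℝ) (x : Fin 2) :
    wernerAssemblage p x true - wernerAssemblage p x false = -(p / 2) • pauliZX x := by
  fin_cases x
  · simp only [wernerAssemblage, Fin.zero_eta, Complex.coe_smul, add_sub_add_right_eq_sub,
      ← smul_sub, rankOneProj_e1_sub_rankOneProj_e0, smul_neg, neg_smul]
  · simp only [wernerAssemblage, Fin.mk_one, Complex.coe_smul, add_sub_add_right_eq_sub,
      ← smul_sub, rankOneProj_xMinus_sub_rankOneProj_xPlus, smul_neg, neg_smul]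

lemma expectation_pauliZX_wernerAssemblage_sub (p : ℝ) (x : Fin 2) :
    expectation (pauliZX x) (wernerAssemblage p x true - wernerAssemblage p x false) = -p := by
  rw [wernerAssemblage_sub, map_smul, expectation_apply, isCliffordFamily_pauliZX.mul_self,
    Matrix.trace_one]
  simp

theorem werner_steerable_general {p : ℝ} (hp : 1 / √2 < |p|) {Λ : Type*} [Fintype Λ] (w : Λ → ℝ)
    (resp : Λ → Fin 2 → Bool → ℝ) (σ : Λ → Matrix (Fin 2) (Fin 2) ℂ) :
    ¬ IsLocalHiddenStateModel w resp σ (wernerAssemblage p) := by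
  intro h
  have hsteer : 2 * |p| ≤ √2 := by
    simpa [expectation_pauliZX_wernerAssemblage_sub, abs_mul] using
      h.abs_sum_expectation_sub_le isCliffordFamily_pauliZX
  have hsqrt : √2 / 2 = 1 / √2 := by rw [Real.sqrt_div_self, one_div]
  linarith

/-- **The two-qubit Werner state is steerable from Alice to Bob for `p > 1/√2`:**
its `σ_z`/`σ_x` assemblage admits no local-hidden-state model. -/
theorem werner_steerable (p : ℝ) (hp₁ : 1 / Real.sqrt 2 < p) (hp₂ : p ≤ 1) :
    ¬ ∃ (Λ : Type) (_ : Fintype Λ) (w : Λ → ℝ)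
        (resp : Λ → Fin 2 → Bool → ℝ) (σ : Λ → Matrix (Fin 2) (Fin 2) ℂ),
      (∀ l, 0 ≤ w l) ∧ (∑ l, w l = 1) ∧
      (∀ l x a, 0 ≤ resp l x a ∧ resp l x a ≤ 1) ∧
      (∀ l x, resp l x true + resp l x false = 1) ∧
      (∀ l, IsDensityMatrix (σ l)) ∧
      (∀ x a, ∑ l, ((w l * resp l x a : ℝ) : ℂ) • σ l = wernerAssemblage p x a) := by
  rintro ⟨Λ, _, w, resp, σ, hw, hw_sum, hresp, hresp_sum, hσ, hA⟩
  exact werner_steerable_general (hp₁.trans_le (le_abs_self p)) w resp σ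
    ⟨hw, hw_sum, fun l x a => (hresp l x a).1, by simpa only [Fintype.sum_bool] using hresp_sum, hσ,
      by simpa only [Complex.coe_smul] using hA⟩
end
end
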